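/- Let n ≥ 1, let A : Matrix (Fin (n+1)) (Fin (n+1)) ℕ with zero diagonal be the adjacency matrix of a strongly connected directed multigraph with Laplacian Q = D − A, and let Σ : Fin (n+1) → ℤ be a strictly positive vector with Matrix.vecMul Σ Q = 0 whose entries have gcd 1. Let C : Fin (n+1) → ℤ satisfy C i ≥ 0 for all i ≠ 0. Call a finite sequence f_0, …, f_{m−1} of vectors in Fin (n+1) → ℤ admissible if each f_j is nonzero, satisfies 0 ≤ f_j i ≤ Σ i for all i and f_j 0 = 0, and for every prefix length p ≤ m and every i ≠ 0 one has C i − (Matrix.vecMul (∑_{j < p} f_j) Q) i ≥ 0; call it maximal if moreover no vector x ≠ 0 with 0 ≤ x ≤ Σ and x 0 = 0 can be fired from the final configuration D = C − Matrix.vecMul (∑_{j < m} f_j) Q without sending some vertex i ≠ 0 into debt. Then any two maximal admissible sequences f and g yield the same final configuration: C − Matrix.vecMul (∑ f_j) Q = C − Matrix.vecMul (∑ g_j) Q. -/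

import Mathlib

open Matrix

/-- The Laplacian `Q = D - A` of the directed multigraph with adjacency matrix `A`. -/
def lap {n : ℕ} (A : Matrix (Fin (n+1)) (Fin (n+1)) ℕ) :
    Matrix (Fin (n+1)) (Fin (n+1)) ℤ :=
  Matrix.diagonal (fun i => ∑ j, (A i j : ℤ)) - A.map (fun a => (a : ℤ))

/-- Strong connectivity of a directed multigraph given by its adjacency matrix. -/
def StronglyConnected {n : ℕ} (A : Matrix (Fin (n+1)) (Fin (n+1)) ℕ) : Prop :=
  ∀ i j : Fin (n+1), i ≠ j → Relation.TransGen (fun a b => 0 < A a b) i j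

/-- `f` is an admissible firing sequence for the configuration `C`:
each firing is nonzero, bounded by `sig`, does not fire the vertex `0`, and
no prefix of firings sends any vertex other than `0` into debt. -/
def Admissible {n : ℕ} (Q : Matrix (Fin (n+1)) (Fin (n+1)) ℤ)
    (sig : Fin (n+1) → ℤ) (C : Fin (n+1) → ℤ)
    {m : ℕ} (f : Fin m → (Fin (n+1) → ℤ)) : Prop :=
  (∀ j, f j ≠ 0 ∧ (∀ i, 0 ≤ f j i ∧ f j i ≤ sig i) ∧ f j 0 = 0) ∧
  (∀ p : ℕ, p ≤ m → ∀ i, i ≠ 0 →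
    0 ≤ C i - Matrix.vecMul (∑ j ∈ Finset.univ.filter (fun j : Fin m => (j : ℕ) < p), f j) Q i)

/-- An admissible firing sequence is maximal if no further nonzero firing `x`
with `0 ≤ x ≤ sig` and `x 0 = 0` can be applied to the final configuration
without sending some vertex other than `0` into debt. -/
def MaximalAdmissible {n : ℕ} (Q : Matrix (Fin (n+1)) (Fin (n+1)) ℤ)
    (sig : Fin (n+1) → ℤ) (C : Fin (n+1) → ℤ)
    {m : ℕ} (f : Fin m → (Fin (n+1) → ℤ)) : Prop :=
  Admissible Q sig C f ∧
  ¬ ∃ x : Fin (n+1) → ℤ, x ≠ 0 ∧ (∀ i, 0 ≤ x i ∧ x i ≤ sig i) ∧ x 0 = 0 ∧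
      (∀ i, i ≠ 0 →
        0 ≤ (C i - Matrix.vecMul (∑ j, f j) Q i) - Matrix.vecMul x Q i)

/-- Monotonicity: raising a firing vector away from `i` only helps vertex `i`. -/
theorem vecMul_lap_le {n : ℕ} (A : Matrix (Fin (n+1)) (Fin (n+1)) ℕ)
    (H M : Fin (n+1) → ℤ) (hle : ∀ k, H k ≤ M k) (i : Fin (n+1)) (hi : M i = H i) :
    Matrix.vecMul M (lap A) i ≤ Matrix.vecMul H (lap A) i := by
  simp only [Matrix.vecMul, dotProduct]
  apply Finset.sum_le_sum
  intro k _
  by_cases hk : k = i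
  · subst hk; rw [hi]
  · have hQ : lap A k i ≤ 0 := by
      simp [lap, Matrix.diagonal_apply_ne _ hk]
    exact mul_le_mul_of_nonpos_right (hle k) hQ

theorem maximal_dominates {n : ℕ} (A : Matrix (Fin (n+1)) (Fin (n+1)) ℕ)
    (sig C : Fin (n+1) → ℤ)
    (m₁ m₂ : ℕ) (f : Fin m₁ → (Fin (n+1) → ℤ)) (g : Fin m₂ → (Fin (n+1) → ℤ))
    (hf : MaximalAdmissible (lap A) sig C f)
    (hg : Admissible (lap A) sig C g) (p : ℕ) (hp : p ≤ m₂) :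
    ∀ i, (∑ j ∈ Finset.univ.filter (fun j : Fin m₂ => (j : ℕ) < p), g j) i
      ≤ (∑ j, f j) i := by
  obtain ⟨⟨hf1, hf2⟩, hmax⟩ := hf
  have hfin : ∀ i, i ≠ 0 → 0 ≤ C i - Matrix.vecMul (∑ j, f j) (lap A) i := by
    intro i hi
    have := hf2 m₁ le_rfl i hi
    simpa using this
  induction p with
  | zero =>
    intro i
    simp only [Nat.not_lt_zero, Finset.filter_false, Finset.sum_empty, Finset.sum_apply,
      Pi.zero_apply]
    exact Finset.sum_nonneg fun j _ => ((hf1 j).2.1 i).1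
  | succ p ih =>
    have ih := ih (by omega)
    have hG := hg.2 (p+1) hp
    obtain ⟨-, hb, hz⟩ := hg.1 ⟨p, by omega⟩
    have hs : (Finset.univ.filter (fun j : Fin m₂ => (j : ℕ) < p + 1))
        = insert ⟨p, by omega⟩ (Finset.univ.filter (fun j : Fin m₂ => (j : ℕ) < p)) := by
      ext j
      simp only [Finset.mem_filter, Finset.mem_univ, true_and, Finset.mem_insert, Fin.ext_iff]
      omega
    have hsum : (∑ j ∈ Finset.univ.filter (fun j : Fin m₂ => (j : ℕ) < p + 1), g j)
        = g ⟨p, by omega⟩ + ∑ j ∈ Finset.univ.filter (fun j : Fin m₂ => (j : ℕ) < p), g j := by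
      rw [hs, Finset.sum_insert (by simp)]
    have hG' : ∀ i, (∑ j ∈ Finset.univ.filter (fun j : Fin m₂ => (j : ℕ) < p + 1), g j) i
        = g ⟨p, by omega⟩ i
          + (∑ j ∈ Finset.univ.filter (fun j : Fin m₂ => (j : ℕ) < p), g j) i := by
      intro i; rw [hsum]; rfl
    generalize (∑ j ∈ Finset.univ.filter (fun j : Fin m₂ => (j : ℕ) < p + 1), g j) = G1 at *
    generalize (∑ j ∈ Finset.univ.filter (fun j : Fin m₂ => (j : ℕ) < p), g j) = G0 at *
    generalize (∑ j, f j) = F at *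
    by_contra hcon
    push Not at hcon
    obtain ⟨k, hk⟩ := hcon
    apply hmax
    refine ⟨fun i => max (G1 i) (F i) - F i, ?_, ?_, ?_, ?_⟩
    · intro h
      have := congrFun h k
      simp only [Pi.zero_apply] at this
      omega
    · intro i
      have := hb i
      have := ih i
      have := hG' i
      constructor <;> beta_reduce <;> omega
    · have := ih 0
      have := hG' 0
      simp only []
      omega
    · intro i hi
      have e : Matrix.vecMul (fun i => max (G1 i) (F i) - F i) (lap A)
          = Matrix.vecMul (fun i => max (G1 i) (F i)) (lap A) - Matrix.vecMul F (lap A) := by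
        rw [← Matrix.sub_vecMul]; rfl
      rw [e, Pi.sub_apply]
      rcases le_total (G1 i) (F i) with h | h
      · have := vecMul_lap_le A F (fun i => max (G1 i) (F i)) (fun k => le_max_right _ _) i
          (max_eq_right h)
        have := hfin i hi
        omega
      · have := vecMul_lap_le A G1 (fun i => max (G1 i) (F i)) (fun k => le_max_left _ _) i
          (max_eq_left h)
        have := hG i hi
        omega

theorem stmt6 (n : ℕ) (hn : 1 ≤ n) (A : Matrix (Fin (n+1)) (Fin (n+1)) ℕ)
    (hdiag : ∀ i, A i i = 0) (hsc : StronglyConnected A)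
    (sig : Fin (n+1) → ℤ) (hpos : ∀ i, 0 < sig i)
    (hker : Matrix.vecMul sig (lap A) = 0)
    (hgcd : Finset.univ.gcd sig = 1)
    (C : Fin (n+1) → ℤ) (hC : ∀ i, i ≠ 0 → 0 ≤ C i)
    (m₁ m₂ : ℕ) (f : Fin m₁ → (Fin (n+1) → ℤ)) (g : Fin m₂ → (Fin (n+1) → ℤ))
    (hf : MaximalAdmissible (lap A) sig C f)
    (hg : MaximalAdmissible (lap A) sig C g) :
    C - Matrix.vecMul (∑ j, f j) (lap A) = C - Matrix.vecMul (∑ j, g j) (lap A) := by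
  have h1 := maximal_dominates A sig C m₁ m₂ f g hf hg.1 m₂ le_rfl
  have h2 := maximal_dominates A sig C m₂ m₁ g f hg hf.1 m₁ le_rfl
  simp only [Fin.is_lt, Finset.filter_true] at h1 h2
  have h : (∑ j, f j) = ∑ j, g j := funext fun i => le_antisymm (h2 i) (h1 i)
  rw [h]
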